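/- Let (R, m, k) be a Cohen-Macaulay local ring with canonical module ω_R and char k != 2, and let M be a finitely generated maximal Cohen-Macaulay R-module such that (1) M has rank 1 and (2) Ext^i_R(M, M^∨) = 0 for 1 <= i <= dim R + 1, where M^∨ = Hom_R(M, ω_R). Then M ≅ R. -/

import Mathlib

/-!
STATEMENT 16: Let (R, m, k) be a Cohen-Macaulay local ring with canonical module ω_R and
char k ≠ 2, and let M be a finitely generated maximal Cohen-Macaulay R-module such that
(1) M has rank 1 and (2) Ext^i_R(M, M^∨) = 0 for 1 ≤ i ≤ dim R + 1, where M^∨ = Hom_R(M, ω_R).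
Then M ≅ R.

Depth is formalized via the standard (Rees) characterization: the depth of `M` w.r.t. `m` is
at least `d` iff `Ext^i_R(R/m, M) = 0` for `i < d`; a canonical module of the Cohen-Macaulay
local ring `(R, m)` of dimension `d` is a finitely generated maximal Cohen-Macaulay module of
finite injective dimension and of type 1.
-/

open CategoryTheory Limits TensorProduct

universe u

/-- `Ext^i_R(R/m, M)` as a module category object. -/
noncomputable def extResidue (R : Type u) [CommRing R] (m : Ideal R) (M : Type u)
    [AddCommGroup M] [Module R M] (i : ℕ) : ModuleCat.{u} R :=
  ((Ext R (ModuleCat.{u} R) i).obj (Opposite.op (ModuleCat.of R (R ⧸ m)))).obj (ModuleCat.of R M)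

/-- Depth of `M` (w.r.t. the ideal `m`) is at least `d`:
`Ext^i_R(R/m, M) = 0` for all `i < d`. -/
def DepthGE (R : Type u) [CommRing R] (m : Ideal R) (M : Type u) [AddCommGroup M]
    [Module R M] (d : ℕ) : Prop :=
  ∀ i : ℕ, i < d → IsZero (extResidue R m M i)

/-- `ω` is a canonical module for `(R, m)` of Krull dimension `d`: it is finitely generated,
maximal Cohen-Macaulay (depth ≥ d), of finite injective dimension, and of type 1
(`Ext^d_R(R/m, ω)` is a simple `R`-module). -/
def IsCanonicalModule (R : Type u) [CommRing R] (m : Ideal R) (d : ℕ) (ω : Type u)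
    [AddCommGroup ω] [Module R ω] : Prop :=
  Module.Finite R ω ∧ DepthGE R m ω d ∧
  (∃ n : ℕ, ∀ (N : ModuleCat.{u} R) (i : ℕ), n < i →
    IsZero (((Ext R (ModuleCat.{u} R) i).obj (Opposite.op N)).obj (ModuleCat.of R ω))) ∧
  IsSimpleModule R (extResidue R m ω d)

/-- `M` has rank one: `M ⊗_R Q` is free of rank 1 over the total ring of fractions `Q` of `R`. -/
def HasRankOne (R : Type u) [CommRing R] (M : Type u) [AddCommGroup M] [Module R M] : Prop :=
  Nonempty ((FractionRing R ⊗[R] M) ≃ₗ[FractionRing R] FractionRing R)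

/-!
The idea is that bilinear forms on `M` with values in `ω/(x)ω`, for `x` a maximal regular sequence,
all lift to bilinear forms with values in `ω`, where rank one leaves no room for alternating forms.

* Since `ω` has finite injective dimension and `R` is Cohen-Macaulay, `Ext^i(M, ω) = 0` for `i ≥ 1`
  (`extVanish_of_finite_injdim`, `extVanish_of_depth`). Cutting `ω` down by one regular element at a
  time, this and the vanishing of `Ext^i(M, Hom(M, ω))` for `1 ≤ i ≤ d` show that every bilinear
  map `M × M → Y := ω/(x)ω` lifts to `M × M → ω` (`exists_bilinear_lift`). As
  `Ext^d(R/m, ω) ≠ 0`, the residue field `k` embeds in `Y`.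
* Nonzerodivisors of `R` are regular on `ω`, because the associated primes of `ω` are minimal
  (`isSMulRegular_of_mem_nonZeroDivisors`). As `M` has rank one, every alternating form
  `M × M → ω` is zero (`HasRankOne.alternating_eq_zero`).
* Let `b : M × M → Y` be alternating, with lift `ψ`. Then `ψ(u, v) - ψ(v, u)` is alternating
  with values in `ω`, hence zero, so `b` is symmetric as well; thus `2b = 0`, and `b = 0` since `2`
  is a unit. If `M` were not cyclic, `M/mM` would have two independent functionals, whose wedge
  product composed with `k ⊆ Y` would be a nonzero alternating form (`exists_span_eq_top`).
* A cyclic module of rank one is faithful, hence isomorphic to `R`.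
-/

/-! ### Vanishing of Ext -/

/-- The derived-functor `Ext` of the module category and Mathlib's `Abelian.Ext` vanish together:
both are computed as cocycles modulo coboundaries on a projective resolution of `X`. -/
theorem isZero_ext_iff {R : Type u} [CommRing R] (X Y : ModuleCat.{u} R) (n : ℕ) :
    IsZero (((Ext R (ModuleCat.{u} R) n).obj (Opposite.op X)).obj Y) ↔
      Subsingleton (Abelian.Ext.{u} X Y n) := by
  let P := ProjectiveResolution.of X
  rw [(P.isoExt (R := R) n Y).isZero_iff, ← HomologicalComplex.exactAt_iff_isZero_homology]
  cases n with
  | zero =>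
    rw [HomologicalComplex.exactAt_iff' _ 0 0 1 (by simp) (by simp), ShortComplex.moduleCat_exact_iff]
    let p : P.complex.X 0 ⟶ X := P.π.f 0
    have hp_epi : Epi p := inferInstanceAs (Epi (P.π.f 0))
    have hp : P.complex.d 1 0 ≫ p = 0 := P.complex_d_comp_π_f_zero
    have key : (∀ f : P.complex.X 0 ⟶ Y, P.complex.d 1 0 ≫ f = 0 → f = 0) ↔
        Subsingleton (X ⟶ Y) := by
      constructor
      · intro h
        refine subsingleton_of_forall_eq 0 fun g => ?_
        rw [← cancel_epi p, comp_zero]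
        exact h (p ≫ g) (by rw [← Category.assoc, hp, zero_comp])
      · intro h f hf
        have hdesc : ∃ g : X ⟶ Y, p ≫ g = f := P.exact₀.desc' f hf
        obtain ⟨g, rfl⟩ := hdesc
        rw [h.elim g 0, comp_zero]
    rw [Abelian.Ext.addEquiv₀.subsingleton_congr, ← key]
    have h0 : ((P.complex.linearYonedaObj R Y).sc' 0 0 1).f = 0 :=
      (P.complex.linearYonedaObj R Y).shape 0 0 (by simp)
    constructor
    · intro h f hf
      obtain ⟨g, hg⟩ := h f hf
      rw [h0] at hg
      exact hg.symm
    · intro h f hf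
      exact ⟨0, by rw [h f hf, map_zero]; rfl⟩
  | succ n =>
    rw [HomologicalComplex.exactAt_iff' _ n (n+1) (n+2) (by simp) (by simp),
      ShortComplex.moduleCat_exact_iff]
    constructor
    · intro h
      refine subsingleton_of_forall_eq 0 fun α => ?_
      obtain ⟨f, hf, rfl⟩ := P.extMk_surjective α (n+2) rfl
      rw [P.extMk_eq_zero_iff f (n+2) rfl hf n rfl]
      exact h f hf
    · intro h f hf
      exact (P.extMk_eq_zero_iff f (n+2) rfl hf n rfl).1 (Subsingleton.elim _ _)

/-- The vanishing `Ext^i_R(N, X) = 0` for unbundled modules, phrased through `Abelian.Ext`. -/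
abbrev ExtVanish (R : Type u) [CommRing R] (N X : Type u) [AddCommGroup N] [Module R N]
    [AddCommGroup X] [Module R X] (i : ℕ) : Prop :=
  Subsingleton (Abelian.Ext.{u} (ModuleCat.of R N) (ModuleCat.of R X) i)

section
variable {R : Type u} [CommRing R]
variable {A B C X : Type u} [AddCommGroup A] [Module R A] [AddCommGroup B] [Module R B]
  [AddCommGroup C] [Module R C] [AddCommGroup X] [Module R X]

theorem shortExact_of {f : A →ₗ[R] B} {g : B →ₗ[R] C} (hf : Function.Injective f)
    (hg : Function.Surjective g) (hfg : Function.Exact f g) :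
    (ModuleCat.shortComplexOfCompEqZero f g hfg.linearMap_comp_eq_zero).ShortExact where
  exact := ModuleCat.shortComplex_exact _ hfg
  mono_f := (ModuleCat.mono_iff_injective _).2 hf
  epi_g := (ModuleCat.epi_iff_surjective _).2 hg

open Abelian in
theorem ExtVanish.mid_left {f : A →ₗ[R] B} {g : B →ₗ[R] C} (hf : Function.Injective f)
    (hg : Function.Surjective g) (hfg : Function.Exact f g) {i : ℕ}
    (hA : ExtVanish R A X i) (hC : ExtVanish R C X i) : ExtVanish R B X i := by
  refine subsingleton_of_forall_eq 0 fun x => ?_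
  obtain ⟨y, rfl⟩ := Ext.contravariant_sequence_exact₂ (shortExact_of hf hg hfg)
    (ModuleCat.of R X) x (hA.elim _ _)
  rw [hC.elim y 0, Ext.comp_zero]

open Abelian in
theorem ExtVanish.sub_left {f : A →ₗ[R] B} {g : B →ₗ[R] C} (hf : Function.Injective f)
    (hg : Function.Surjective g) (hfg : Function.Exact f g) {i : ℕ}
    (hB : ExtVanish R B X i) (hC : ExtVanish R C X (i + 1)) : ExtVanish R A X i := by
  refine subsingleton_of_forall_eq 0 fun x => ?_
  obtain ⟨y, rfl⟩ := Ext.contravariant_sequence_exact₁ (shortExact_of hf hg hfg)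
    (ModuleCat.of R X) x (Nat.add_comm 1 i) (hC.elim _ _)
  rw [hB.elim y 0, Ext.comp_zero]

open Abelian in
theorem ExtVanish.quot_right {f : A →ₗ[R] B} {g : B →ₗ[R] C} (hf : Function.Injective f)
    (hg : Function.Surjective g) (hfg : Function.Exact f g) {i : ℕ}
    (hB : ExtVanish R X B i) (hA : ExtVanish R X A (i + 1)) : ExtVanish R X C i := by
  refine subsingleton_of_forall_eq 0 fun x => ?_
  obtain ⟨y, rfl⟩ := Ext.covariant_sequence_exact₃ (ModuleCat.of R X) (shortExact_of hf hg hfg)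
    x rfl (hA.elim _ _)
  rw [hB.elim y 0, Ext.zero_comp]

open Abelian in
/-- If `Ext^1(X, A) = 0`, then maps from `X` lift along the surjection of `0 → A → B → C → 0`. -/
theorem ExtVanish.lift {f : A →ₗ[R] B} {g : B →ₗ[R] C} (hf : Function.Injective f)
    (hg : Function.Surjective g) (hfg : Function.Exact f g)
    (hA : ExtVanish R X A 1) (φ : X →ₗ[R] C) : ∃ ψ : X →ₗ[R] B, g ∘ₗ ψ = φ := by
  obtain ⟨y, hy⟩ := Ext.covariant_sequence_exact₃ (ModuleCat.of R X) (shortExact_of hf hg hfg)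
    (Ext.mk₀ (ModuleCat.ofHom φ)) rfl (hA.elim _ _)
  obtain ⟨ψ, rfl⟩ := Ext.homEquiv₀.symm.surjective y
  refine ⟨ψ.hom, ?_⟩
  simp only [Ext.homEquiv₀_symm_apply, Ext.mk₀_comp_mk₀] at hy
  have := (Ext.mk₀_bijective _ _).1 hy
  simpa [ModuleCat.shortComplexOfCompEqZero] using congrArg ModuleCat.Hom.hom this

theorem ExtVanish.of_subsingleton_left [Subsingleton A] (i : ℕ) : ExtVanish R A X i := by
  refine subsingleton_of_forall_eq 0 fun x => ?_
  have : 𝟙 (ModuleCat.of R A) = 0 := by ext; exact Subsingleton.elim (α := A) _ _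
  rw [← Abelian.Ext.mk₀_id_comp x, this, Abelian.Ext.mk₀_zero, Abelian.Ext.zero_comp]

theorem ExtVanish.of_equiv_left (e : A ≃ₗ[R] B) {i : ℕ} (h : ExtVanish R B X i) :
    ExtVanish R A X i :=
  ExtVanish.mid_left (A := PUnit.{u+1}) (f := 0) (g := e.toLinearMap)
    (Function.injective_of_subsingleton _) e.surjective
    ((e.exact_zero_iff_injective _).2 e.injective) 
    (ExtVanish.of_subsingleton_left i) h

theorem extVanish_zero_iff : ExtVanish R A X 0 ↔ Subsingleton (A →ₗ[R] X) :=
  (Abelian.Ext.addEquiv₀.trans ModuleCat.homAddEquiv).subsingleton_congr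

theorem isSMulRegular_injective {x : R} (hx : IsSMulRegular X x) :
    Function.Injective (LinearMap.lsmul R X x) := hx

/-- If `x ∈ m` is regular on `A` and `Ext^{i+1}(A/xA, X) = 0`, then multiplication by `x` is
surjective on the finitely generated module `Ext^i(A, X)`, which vanishes by Nakayama's lemma. -/
theorem ExtVanish.of_quot [IsNoetherianRing R] [IsLocalRing R] [Module.Finite R A]
    [Module.Finite R X] {x : R} (hxm : x ∈ IsLocalRing.maximalIdeal R) (hx : IsSMulRegular A x)
    {i : ℕ} (h : ExtVanish R (QuotSMulTop x A) X (i + 1)) : ExtVanish R A X i := by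
  have hS := hx.smulShortComplex_shortExact (M := ModuleCat.of R A)
  have key : ∀ y : Abelian.Ext (ModuleCat.of R A) (ModuleCat.of R X) i, ∃ z, y = x • z := by
    intro y
    have hz : ∃ z : Abelian.Ext (ModuleCat.of R A) (ModuleCat.of R X) i,
        (Abelian.Ext.mk₀ (x • 𝟙 (ModuleCat.of R A))).comp z (zero_add i) = y :=
      Abelian.Ext.contravariant_sequence_exact₁ hS (ModuleCat.of R X) y (Nat.add_comm 1 i)
        (h.elim _ _)
    obtain ⟨z, hz⟩ := hz
    exact ⟨z, by rw [← hz]; simp [Abelian.Ext.mk₀_smul]⟩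
  have : (⊤ : Submodule R (Abelian.Ext (ModuleCat.of R A) (ModuleCat.of R X) i)) ≤
      IsLocalRing.maximalIdeal R • ⊤ := by
    intro y _
    obtain ⟨z, rfl⟩ := key y
    exact Submodule.smul_mem_smul hxm trivial
  have := Submodule.eq_bot_of_le_smul_of_le_jacobson_bot _ _ Module.Finite.fg_top this
    (IsLocalRing.maximalIdeal_le_jacobson _)
  exact (Submodule.subsingleton_iff R).1 (subsingleton_of_bot_eq_top this.symm)

/-- If `x` is regular on `X` and kills `A`, then the connecting map
`Ext^i(A, X/xX) → Ext^{i+1}(A, X)` is surjective, because `x` acts as zero on its target. -/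
theorem not_extVanish_quot {x : R} (hx : IsSMulRegular X x) (hA : x ∈ Module.annihilator R A)
    {i : ℕ} (h : ¬ ExtVanish R A X (i + 1)) : ¬ ExtVanish R A (QuotSMulTop x X) i := by
  have hS := hx.smulShortComplex_shortExact (M := ModuleCat.of R X)
  intro h0
  refine h (subsingleton_of_forall_eq 0 fun y => ?_)
  obtain ⟨z, rfl⟩ := Abelian.Ext.covariant_sequence_exact₁ (ModuleCat.of R A) hS y (by
    have := Abelian.Ext.postcomp_smul_id_eq_zero_of_mem_annihilator (M := ModuleCat.of R X)
      (N := ModuleCat.of R A) hA (i + 1)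
    exact congrArg (fun t => t.hom y) this) rfl
  exact (congrArg (fun t => Abelian.Ext.comp t hS.extClass rfl) (h0.elim z 0)).trans
    (Abelian.Ext.zero_comp ..)

open Pointwise in
theorem ExtVanish.quotSMulTop_right {x : R} (hx : IsSMulRegular X x) {i : ℕ}
    (h0 : ExtVanish R A X i) (h1 : ExtVanish R A X (i + 1)) :
    ExtVanish R A (QuotSMulTop x X) i :=
  ExtVanish.quot_right (f := LinearMap.lsmul R X x) (g := (x • (⊤ : Submodule R X)).mkQ) hx
    (Submodule.mkQ_surjective _) (LinearMap.exact_lsmul_mkQ_smul_top X x) h0 h1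

end

/-! ### Associated primes of maximal Cohen-Macaulay modules -/

section
variable {R : Type u} [CommRing R] [IsNoetherianRing R] [IsLocalRing R]

open IsLocalRing Pointwise

theorem exists_regular_of_extVanish_zero {X : Type u} [AddCommGroup X] [Module R X]
    [Module.Finite R X] (h : ExtVanish R (R ⧸ maximalIdeal R) X 0) :
    ∃ x ∈ maximalIdeal R, IsSMulRegular X x := by
  obtain ⟨x, hx, hr⟩ := IsSMulRegular.subsingleton_linearMap_iff.1 (extVanish_zero_iff.1 h)
  rw [Ideal.annihilator_quotient] at hx
  exact ⟨x, hx, hr⟩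

/-- If `x ∈ m` is regular on `X`, each associated prime of `X` lies strictly inside some associated
prime of `X/xX`. -/
theorem exists_lt_associatedPrime {X : Type u} [AddCommGroup X] [Module R X]
    [Module.Finite R X] {x : R} (hxm : x ∈ maximalIdeal R) (hx : IsSMulRegular X x)
    {p : Ideal R} (hp : p ∈ associatedPrimes R X) :
    ∃ q ∈ associatedPrimes R (QuotSMulTop x X), p < q := by
  obtain ⟨hpp, u0, hu0⟩ := isAssociatedPrime_iff.1 hp
  have mem_p : ∀ r, r ∈ p ↔ r • u0 = 0 := fun r => by
    rw [hu0, Submodule.mem_colon_singleton, Submodule.mem_bot]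
  have hu0ne : u0 ≠ 0 := by
    rintro rfl
    exact hpp.ne_top ((Ideal.eq_top_iff_one _).2 ((mem_p 1).2 (smul_zero _)))
  -- The elements of `X` killed by `p` are not all divisible by `x`: otherwise, `x` being regular,
  -- they would form a nonzero submodule `U` with `U = xU`. One that is not divisible by `x` gives
  -- a nonzero class in `X/xX` killed by both `p` and `x ∉ p`.
  let U : Submodule R X := Submodule.torsionBySet R X (p : Set R)
  have mem_U : ∀ v, v ∈ U ↔ ∀ r ∈ p, r • v = 0 := fun v => by
    rw [Submodule.mem_torsionBySet_iff]; simp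
  have hu0U : u0 ∈ U := (mem_U _).2 fun r hr => (mem_p r).1 hr
  have hxp : x ∉ p := fun h => hu0ne (hx (by simpa using (mem_p x).1 h))
  have hnot : ¬ U ≤ x • (⊤ : Submodule R X) := by
    intro hle
    have : U ≤ maximalIdeal R • U := by
      intro v hv
      obtain ⟨w, -, rfl⟩ := (Submodule.mem_smul_pointwise_iff_exists _ _ _).1 (hle hv)
      refine Submodule.smul_mem_smul hxm ((mem_U _).2 fun r hr => hx ?_)
      have := (mem_U _).1 hv r hr
      simpa [smul_comm x r w] using this
    have := Submodule.eq_bot_of_le_smul_of_le_jacobson_bot _ _ (IsNoetherian.noetherian U) this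
      (maximalIdeal_le_jacobson _)
    rw [this] at hu0U
    exact hu0ne (by simpa using hu0U)
  obtain ⟨v, hvU, hv⟩ := Set.not_subset.1 hnot
  have hv0 : (Submodule.Quotient.mk v : QuotSMulTop x X) ≠ 0 := by
    rwa [Ne, Submodule.Quotient.mk_eq_zero]
  obtain ⟨q, hq, hle⟩ := exists_le_isAssociatedPrime_of_isNoetherianRing R _ hv0
  refine ⟨q, hq, lt_of_le_of_ne ?_ ?_⟩
  · intro r hr
    apply hle
    rw [Submodule.mem_colon_singleton, Submodule.mem_bot, ← Submodule.Quotient.mk_smul,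
      (mem_U v).1 hvU r hr, Submodule.Quotient.mk_zero]
  · rintro rfl
    apply hxp
    apply hle
    rw [Submodule.mem_colon_singleton, Submodule.mem_bot, ← Submodule.Quotient.mk_smul,
      Submodule.Quotient.mk_eq_zero]
    exact Submodule.smul_mem_pointwise_smul _ _ _ trivial

/-- The depth of `X` is at most `dim R/p` for every associated prime `p` of `X`; here `dim R/p`
appears as the coheight of `p` in `Spec R`. -/
theorem depth_le_coheight (n : ℕ) : ∀ {X : Type u} [AddCommGroup X] [Module R X]
    [Module.Finite R X], (∀ i < n, ExtVanish R (R ⧸ maximalIdeal R) X i) →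
    ∀ p : PrimeSpectrum R, p.asIdeal ∈ associatedPrimes R X → (n : ℕ∞) ≤ Order.coheight p := by
  induction n with
  | zero => intros; simp
  | succ n ih =>
    intro X _ _ _ h p hp
    obtain ⟨x, hxm, hx⟩ := exists_regular_of_extVanish_zero (h 0 n.succ_pos)
    obtain ⟨q, hq, hpq⟩ := exists_lt_associatedPrime hxm hx hp
    let q' : PrimeSpectrum R := ⟨q, hq.isPrime⟩
    have h1 := ih (X := QuotSMulTop x X) (fun i hi => ExtVanish.quotSMulTop_right hx
      (h i (by omega)) (h (i + 1) (by omega))) q' hq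
    have h2 := Order.coheight_add_one_le (show p < q' from hpq)
    push_cast
    exact le_trans (by gcongr) h2

/-- Nonzerodivisors of `R` act regularly on a maximal Cohen-Macaulay module: its associated primes
have coheight `dim R`, so they are minimal primes of `R`. -/
theorem isSMulRegular_of_mem_nonZeroDivisors {d : ℕ} (hd : ringKrullDim R = d)
    {X : Type u} [AddCommGroup X] [Module R X] [Module.Finite R X]
    (h : ∀ i < d, ExtVanish R (R ⧸ maximalIdeal R) X i) {t : R} (ht : t ∈ nonZeroDivisors R) :
    IsSMulRegular X t := by
  by_contra hreg
  have : t ∈ ⋃ p ∈ associatedPrimes R X, (p : Set R) := by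
    rw [biUnion_associatedPrimes_eq_compl_regular]; exact hreg
  obtain ⟨p, hp, htp⟩ := by simpa only [Set.mem_iUnion, exists_prop] using this
  have hpp : p.IsPrime := hp.isPrime
  refine notMem_nonZeroDivisors_of_mem_mem_minimalPrimes htp ?_ ht
  rw [minimalPrimes_eq_minimals]
  refine ⟨hpp, fun q hq hqp => ?_⟩
  by_contra hne
  let p' : PrimeSpectrum R := ⟨p, hpp⟩
  let q' : PrimeSpectrum R := ⟨q, hq⟩
  have hlt : q' < p' := lt_of_le_not_ge hqp hne
  have h1 := depth_le_coheight d h p' hp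
  have h2 := Order.coheight_add_one_le hlt
  have h3 := Order.coheight_le_krullDim q'
  have h4 : ((d + 1 : ℕ) : ℕ∞) ≤ Order.coheight q' := by
    push_cast; exact le_trans (by gcongr) h2
  have h5 : (((d + 1 : ℕ) : ℕ∞) : WithBot ℕ∞) ≤ Order.krullDim (PrimeSpectrum R) :=
    le_trans (WithBot.coe_le_coe.2 h4) h3
  change _ ≤ ringKrullDim R at h5
  rw [hd] at h5
  have h6 : ((d + 1 : ℕ) : WithBot ℕ∞) ≤ (d : ℕ) := h5
  have := Nat.cast_le.1 h6
  omega

end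

/-! ### Finite injective dimension -/

section
variable {R : Type u} [CommRing R] [IsNoetherianRing R] [IsLocalRing R]

open IsLocalRing Pointwise

/-- A Cohen-Macaulay local ring of dimension `d` has a cyclic module `R/I` of projective dimension
at most `d` containing a copy of the residue field: the quotient by a maximal regular sequence. -/
theorem exists_module_pd {d : ℕ} (hd : ringKrullDim R = d)
    (hCM : ∀ i < d, ExtVanish R (R ⧸ maximalIdeal R) R i) :
    ∃ I : Ideal R, (∃ f : (R ⧸ maximalIdeal R) →ₗ[R] (R ⧸ I), Function.Injective f) ∧
      ∀ (X : Type u) [AddCommGroup X] [Module R X] (n : ℕ), d < n → ExtVanish R (R ⧸ I) X n := by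
  have hlt : maximalIdeal R • (⊤ : Submodule R (ModuleCat.of R R)) < ⊤ := by
    change maximalIdeal R • (⊤ : Ideal R) < ⊤
    rw [smul_eq_mul, Ideal.mul_top]
    exact (maximalIdeal.isMaximal R).ne_top.lt_top
  have hsupp : Module.support R (ModuleCat.of R (R ⧸ maximalIdeal R)) =
      PrimeSpectrum.zeroLocus (maximalIdeal R) := by
    change Module.support R (R ⧸ maximalIdeal R) = _
    rw [Module.support_eq_zeroLocus, Ideal.annihilator_quotient]
  obtain ⟨rs, hlen, hmem, hreg⟩ := ModuleCat.exists_isRegular_of_exists_subsingleton_ext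
    (maximalIdeal R) d (ModuleCat.of R R) hlt (ModuleCat.of R (R ⧸ maximalIdeal R)) hsupp hCM
  replace hreg : RingTheory.Sequence.IsRegular R rs := hreg
  refine ⟨Ideal.ofList rs, ?_, ?_⟩
  · have hne : Ideal.ofList rs ≠ ⊤ := by
      intro h
      exact hreg.top_ne_smul (by rw [h]; simp)
    have hdim : ringKrullDim (R ⧸ Ideal.ofList rs) = 0 := by
      have h := ringKrullDim_add_length_eq_ringKrullDim_of_isRegular rs hreg
      rw [hlen, hd] at h
      have : Nontrivial (R ⧸ Ideal.ofList rs) := Ideal.Quotient.nontrivial_iff.2 hne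
      obtain ⟨e, he⟩ := WithBot.ne_bot_iff_exists.1 (ne_of_gt (lt_of_lt_of_le
        (WithBot.bot_lt_coe (0 : ℕ∞))
        (ringKrullDim_nonneg_of_nontrivial (R := R ⧸ Ideal.ofList rs))))
      rw [← he] at h ⊢
      have h' : e + (d : ℕ∞) = 0 + (d : ℕ∞) := by
        rw [zero_add]; exact_mod_cast h
      have := WithTop.add_right_cancel (ENat.natCast_ne_top d) h'
      exact_mod_cast this
    obtain ⟨p, hp⟩ := Ideal.nonempty_minimalPrimes hne
    have hmax : p.IsMaximal :=
      Ideal.krullDimLE_zero_quotient_iff_forall_minimalPrimes_isMaximal.1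
        (Ring.krullDimLE_iff.2 (by rw [hdim]; rfl)) p hp
    have hpm : p = maximalIdeal R := (isMaximal_iff R).1 hmax
    subst hpm
    have := Module.associatedPrimes.minimalPrimes_annihilator_subset_associatedPrimes R
      (R ⧸ Ideal.ofList rs) (by rwa [Ideal.annihilator_quotient])
    exact ((isAssociatedPrime_iff_exists_injective_linearMap _ _).1 this).2
  · intro X _ _ n hn
    have h := ModuleCat.projectiveDimension_quotient_eq_length.{u} rs hreg
    have h2 : HasProjectiveDimensionLT
        (ModuleCat.of R (Shrink.{u} (R ⧸ Ideal.ofList rs))) (d + 1) :=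
      (projectiveDimension_le_iff _ d).1 (by rw [h, hlen])
    exact ExtVanish.of_equiv_left (Shrink.linearEquiv.{u} R _).symm
      (HasProjectiveDimensionLT.subsingleton _ (d + 1) n hn (ModuleCat.of R X))

/-- Over a Cohen-Macaulay local ring, a finitely generated module `ω` of finite injective dimension
satisfies `Ext^i(N, ω) = 0` for all finitely generated `N` and all `i > dim R`. -/
theorem extVanish_of_finite_injdim {d : ℕ} (hd : ringKrullDim R = d)
    (hCM : ∀ i < d, ExtVanish R (R ⧸ maximalIdeal R) R i)
    {ω : Type u} [AddCommGroup ω] [Module R ω] [Module.Finite R ω]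
    (hω : ∃ n : ℕ, ∀ (N : Type u) [AddCommGroup N] [Module R N] (i : ℕ), n < i →
      ExtVanish R N ω i) :
    ∀ (N : Type u) [AddCommGroup N] [Module R N] [Module.Finite R N] (i : ℕ), d < i →
      ExtVanish R N ω i := by
  obtain ⟨n, hn⟩ := hω
  -- Descending induction on the degree, starting above the given bound on injective dimension.
  suffices H : ∀ k, ∀ (N : Type u) [AddCommGroup N] [Module R N] [Module.Finite R N] (i : ℕ),
      d < i → n < i + k → ExtVanish R N ω i by
    intro N _ _ _ i hi
    exact H (n + 1) N i hi (by omega)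
  intro k
  induction k with
  | zero => intro N _ _ _ i _ hi; exact hn N i hi
  | succ k ih =>
    intro N _ _ hN i hi hik
    refine IsNoetherianRing.induction_on_isQuotientEquivQuotientPrime R hN
      (motive := fun N _ _ _ => ExtVanish R N ω i) ?_ ?_ ?_
    · intro N _ _ _ _
      exact ExtVanish.of_subsingleton_left i
    · intro N _ _ _ p e
      refine ExtVanish.of_equiv_left e ?_
      by_cases hp : p.asIdeal = maximalIdeal R
      · rw [hp]
        -- `Ext^i(R/m, ω)` sits between `Ext^i(R/I, ω)`, zero by projective dimension, and
        -- `Ext^{i+1}((R/I)/(R/m), ω)`, zero by induction.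
        obtain ⟨I, ⟨f, hf⟩, hI⟩ := exists_module_pd hd hCM
        exact ExtVanish.sub_left hf (Submodule.mkQ_surjective (LinearMap.range f))
          (LinearMap.exact_map_mkQ_range f) (hI ω i hi) (ih _ (i + 1) (by omega) (by omega))
      · obtain ⟨x, hxm, hxp⟩ := Set.exists_of_ssubset
          (lt_of_le_of_ne (le_maximalIdeal p.isPrime.ne_top) hp : p.asIdeal < maximalIdeal R)
        refine ExtVanish.of_quot hxm ?_ (ih _ (i + 1) (by omega) (by omega))
        have : x ∈ (p.asIdeal : Set R)ᶜ := hxp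
        intro a b hab
        have hx0 : (Ideal.Quotient.mk p.asIdeal x) ≠ 0 := by
          rwa [Ne, Ideal.Quotient.eq_zero_iff_mem]
        exact mul_left_cancel₀ hx0 hab
    · intro N₁ _ _ _ N₂ _ _ _ N₃ _ _ _ f g hf hg hfg h1 h3
      exact ExtVanish.mid_left hf hg hfg h1 h3

/-- If `Ext^i(N, ω)` vanishes for all finitely generated `N` and `i > d`, then a finitely generated
`N` of depth at least `j` has `Ext^i(N, ω) = 0` already for `i > d - j`. -/
theorem extVanish_of_depth {d : ℕ} {ω : Type u} [AddCommGroup ω] [Module R ω] [Module.Finite R ω]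
    (hω : ∀ (N : Type u) [AddCommGroup N] [Module R N] [Module.Finite R N] (i : ℕ), d < i →
      ExtVanish R N ω i) (j : ℕ) :
    ∀ (N : Type u) [AddCommGroup N] [Module R N] [Module.Finite R N],
      (∀ i < j, ExtVanish R (R ⧸ maximalIdeal R) N i) → ∀ i, d < i + j → ExtVanish R N ω i := by
  induction j with
  | zero => intro N _ _ _ _ i hi; exact hω N i hi
  | succ j ih =>
    intro N _ _ _ hN i hi
    obtain ⟨x, hxm, hx⟩ := exists_regular_of_extVanish_zero (hN 0 j.succ_pos)
    exact ExtVanish.of_quot hxm hx (ih (QuotSMulTop x N) (fun i hi =>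
      ExtVanish.quotSMulTop_right hx (hN i (by omega)) (hN (i + 1) (by omega))) (i + 1) (by omega))

end

/-! ### Lifting bilinear maps modulo a regular sequence -/

section
variable {R : Type u} [CommRing R]

theorem exact_compRight {A B C M : Type u} [AddCommGroup A] [Module R A] [AddCommGroup B]
    [Module R B] [AddCommGroup C] [Module R C] [AddCommGroup M] [Module R M]
    {f : A →ₗ[R] B} {g : B →ₗ[R] C} (hf : Function.Injective f) (hfg : Function.Exact f g) :
    Function.Exact (LinearMap.compRight R f : (M →ₗ[R] A) →ₗ[R] M →ₗ[R] B)
      (LinearMap.compRight R g) := by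
  intro φ
  constructor
  · intro h
    have hmem : ∀ u, φ u ∈ LinearMap.range f := fun u =>
      (hfg (φ u)).1 (LinearMap.congr_fun h u)
    refine ⟨(LinearEquiv.ofInjective f hf).symm.toLinearMap ∘ₗ φ.codRestrict _ hmem, ?_⟩
    ext u
    exact congrArg Subtype.val ((LinearEquiv.ofInjective f hf).apply_symm_apply ⟨φ u, hmem u⟩)
  · rintro ⟨ψ, rfl⟩
    ext u
    exact hfg.apply_apply_eq_zero _

variable [IsNoetherianRing R] [IsLocalRing R]

open IsLocalRing Pointwise

/-- Let `X` have depth exactly `d`, and suppose `Ext^i(M, X) = 0 = Ext^i(M, Hom(M, X))` for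
`1 ≤ i ≤ d`. Then there is a map `π : X → Y` along which every bilinear map `M × M → Y` lifts to
a bilinear map `M × M → X`, and such that `Y` has nonzero socle. The module `Y` is the quotient of
`X` by a maximal `X`-regular sequence. -/
theorem exists_bilinear_lift {M : Type u} [AddCommGroup M] [Module R M] (d : ℕ) :
    ∀ (X : Type u) [AddCommGroup X] [Module R X] [Module.Finite R X],
    (∀ i < d, ExtVanish R (R ⧸ maximalIdeal R) X i) →
    ¬ ExtVanish R (R ⧸ maximalIdeal R) X d →
    (∀ i, 1 ≤ i → i ≤ d → ExtVanish R M X i) →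
    (∀ i, 1 ≤ i → i ≤ d → ExtVanish R M (M →ₗ[R] X) i) →
    ∃ (Y : Type u) (_ : AddCommGroup Y) (_ : Module R Y) (π : X →ₗ[R] Y),
      (∀ φ : M →ₗ[R] M →ₗ[R] Y, ∃ ψ : M →ₗ[R] M →ₗ[R] X, ∀ u v, π (ψ u v) = φ u v) ∧
      ∃ ι : (R ⧸ maximalIdeal R) →ₗ[R] Y, ι ≠ 0 := by
  induction d with
  | zero =>
    intro X _ _ _ _ hnd _ _
    refine ⟨X, _, _, LinearMap.id, fun φ => ⟨φ, fun _ _ => rfl⟩, ?_⟩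
    by_contra! h
    exact hnd (extVanish_zero_iff.2 (subsingleton_of_forall_eq 0 h))
  | succ d ih =>
    intro X _ _ _ hdep hnd h1 h2
    obtain ⟨x, hxm, hx⟩ := exists_regular_of_extVanish_zero (hdep 0 d.succ_pos)
    let f : X →ₗ[R] X := LinearMap.lsmul R X x
    let g : X →ₗ[R] QuotSMulTop x X := (x • (⊤ : Submodule R X)).mkQ
    have hf : Function.Injective f := hx
    have hg : Function.Surjective g := Submodule.mkQ_surjective _
    have hfg : Function.Exact f g := LinearMap.exact_lsmul_mkQ_smul_top X x
    have hF : Function.Injective (LinearMap.compRight R f : (M →ₗ[R] X) →ₗ[R] M →ₗ[R] X) :=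
      fun a b hab => LinearMap.ext fun u => hf (LinearMap.congr_fun hab u)
    have hG : Function.Surjective
        (LinearMap.compRight R g : (M →ₗ[R] X) →ₗ[R] M →ₗ[R] QuotSMulTop x X) :=
      fun φ => ExtVanish.lift hf hg hfg (h1 1 le_rfl (by omega)) φ
    have hFG := exact_compRight (M := M) hf hfg
    obtain ⟨Y, _, _, π, hπ, hι⟩ := ih (QuotSMulTop x X)
      (fun i hi => ExtVanish.quotSMulTop_right hx (hdep i (by omega)) (hdep (i + 1) (by omega)))
      (not_extVanish_quot hx (by rwa [Ideal.annihilator_quotient]) hnd)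
      (fun i hi hid => ExtVanish.quotSMulTop_right hx (h1 i hi (by omega))
        (h1 (i + 1) (by omega) (by omega)))
      (fun i hi hid => ExtVanish.quot_right hF hG hFG (h2 i hi (by omega))
        (h2 (i + 1) (by omega) (by omega)))
    refine ⟨Y, _, _, π ∘ₗ g, fun φ => ?_, hι⟩
    obtain ⟨φ', hφ'⟩ := hπ φ
    obtain ⟨ψ, hψ⟩ := ExtVanish.lift hF hG hFG (h2 1 le_rfl (by omega)) φ'
    refine ⟨ψ, fun u v => ?_⟩
    rw [← hφ', ← hψ]
    rfl

end

/-! ### Modules of rank one -/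

section
variable {R : Type u} [CommRing R]

/-- Some `w : M` spans a module of rank one up to denominators. -/
theorem HasRankOne.exists_generator {M : Type u} [AddCommGroup M] [Module R M]
    (h : HasRankOne R M) :
    ∃ w : M, ∀ u : M, ∃ t ∈ nonZeroDivisors R, ∃ r : R, t • u = r • w := by
  obtain ⟨e⟩ := h
  -- `w` is a numerator of the basis vector `e⁻¹ 1` of `Q ⊗ M`.
  let l : M →ₗ[R] FractionRing R ⊗[R] M := TensorProduct.mk R (FractionRing R) M 1
  have : IsLocalizedModule (nonZeroDivisors R) l :=
    (isLocalizedModule_iff_isBaseChange (nonZeroDivisors R) (FractionRing R) l).2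
      (TensorProduct.isBaseChange R M (FractionRing R))
  obtain ⟨⟨w, s⟩, hw⟩ := IsLocalizedModule.surj (nonZeroDivisors R) l (e.symm 1)
  refine ⟨w, fun u => ?_⟩
  obtain ⟨⟨r, t⟩, hr⟩ := IsLocalization.surj (nonZeroDivisors R) (e (l u))
  have smul_e : ∀ (a : R) (z : FractionRing R ⊗[R] M), e (a • z) = a • e z := fun a z => by
    rw [← algebraMap_smul (FractionRing R) a z, map_smul, algebraMap_smul]
  have key : l ((s * t : R) • u) = l (r • w) := by
    apply e.injective
    have hw' : (s : R) • e.symm 1 = l w := hw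
    simp only at hr
    rw [l.map_smul, l.map_smul, smul_e, smul_e, ← hw', smul_e, e.apply_symm_apply, mul_smul]
    simp only [Algebra.smul_def, mul_one]
    rw [mul_comm (algebraMap R _ (t : R)), hr, mul_comm]
  obtain ⟨c, hc⟩ := (IsLocalizedModule.eq_iff_exists (nonZeroDivisors R) l).1 key
  refine ⟨c * (s * t), (c * (s * t)).2, c * r, ?_⟩
  simpa [Submonoid.smul_def, mul_smul] using hc

/-- A module of rank one has no nonzero alternating bilinear form into a module on which the
nonzerodivisors of `R` act regularly. -/
theorem HasRankOne.alternating_eq_zero {M X : Type u} [AddCommGroup M] [Module R M]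
    [AddCommGroup X] [Module R X] (h : HasRankOne R M)
    (hX : ∀ t ∈ nonZeroDivisors R, IsSMulRegular X t)
    (a : M →ₗ[R] M →ₗ[R] X) (ha : ∀ u, a u u = 0) (u v : M) : a u v = 0 := by
  obtain ⟨w, hw⟩ := h.exists_generator
  obtain ⟨t, ht, r, hr⟩ := hw u
  obtain ⟨t', ht', r', hr'⟩ := hw v
  have h1 : a (t • u) (t' • v) = 0 := by
    rw [hr, hr', map_smul, map_smul, LinearMap.smul_apply, ha, smul_zero, smul_zero]
  rw [map_smul, map_smul, LinearMap.smul_apply] at h1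
  exact (hX t ht) ((hX t' ht') (by simpa using h1) |>.trans (smul_zero t).symm)

theorem HasRankOne.nontrivial [Nontrivial R] {M : Type u} [AddCommGroup M] [Module R M]
    (h : HasRankOne R M) : Nontrivial M := by
  obtain ⟨e⟩ := h
  by_contra hM
  rw [not_nontrivial_iff_subsingleton] at hM
  have : Subsingleton (FractionRing R) := e.symm.toEquiv.subsingleton
  exact not_subsingleton (FractionRing R) this

/-- A module of rank one is faithful. -/
theorem HasRankOne.eq_zero_of_annihilates {M : Type u} [AddCommGroup M] [Module R M]
    (h : HasRankOne R M) {r : R} (hr : ∀ u : M, r • u = 0) : r = 0 := by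
  obtain ⟨e⟩ := h
  have h1 : ∀ z : FractionRing R ⊗[R] M, r • z = 0 := by
    intro z
    induction z with
    | zero => simp
    | tmul a b => rw [← TensorProduct.tmul_smul, hr, TensorProduct.tmul_zero]
    | add a b ha hb => rw [smul_add, ha, hb, add_zero]
  have h2 : r • (1 : FractionRing R) = 0 := by
    have := congrArg e (h1 (e.symm 1))
    rw [map_zero, ← algebraMap_smul (FractionRing R) r, map_smul, e.apply_symm_apply] at this
    rw [← algebraMap_smul (FractionRing R) r]; exact this
  rw [Algebra.smul_def, mul_one] at h2
  exact (FaithfulSMul.algebraMap_injective R (FractionRing R)) (by rw [h2, map_zero])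
end

/-! ### Alternating forms and cyclic modules -/

section
variable {R : Type u} [CommRing R] [IsLocalRing R]

open IsLocalRing

theorem exists_ne_zero_to_residue {N : Type u} [AddCommGroup N] [Module R N] [Module.Finite R N]
    [Nontrivial N] : ∃ f : N →ₗ[R] (R ⧸ maximalIdeal R), f ≠ 0 := by
  obtain ⟨P, hP⟩ := IsCoatomic.exists_coatom (α := Submodule R N)
  have hs : IsSimpleModule R (N ⧸ P) := isSimpleModule_iff_isCoatom.2 hP
  obtain ⟨I, hI, ⟨e⟩⟩ := isSimpleModule_iff_quot_maximal.1 hs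
  obtain rfl : I = maximalIdeal R := (isMaximal_iff R).1 hI
  refine ⟨e.toLinearMap ∘ₗ P.mkQ, fun h0 => ?_⟩
  have : Nontrivial (N ⧸ P) := Submodule.Quotient.nontrivial_iff.2 hP.1
  obtain ⟨z, hz⟩ := exists_ne (0 : N ⧸ P)
  obtain ⟨y, rfl⟩ := P.mkQ_surjective z
  exact hz (e.injective (by simpa using LinearMap.congr_fun h0 y))

/-- If every alternating bilinear map from `M` to a module with nonzero socle vanishes, then `M` is
cyclic: two linearly independent functionals `f, h : M → k` would give the nonzero alternating map
`f ∧ h : M × M → k ⊆ Y`. -/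
theorem exists_span_eq_top {M Y : Type u} [AddCommGroup M] [Module R M] [Module.Finite R M]
    [Nontrivial M] [AddCommGroup Y] [Module R Y]
    (hY : ∃ ι : (R ⧸ maximalIdeal R) →ₗ[R] Y, ι ≠ 0)
    (halt : ∀ b : M →ₗ[R] M →ₗ[R] Y, (∀ u, b u u = 0) → b = 0) :
    ∃ g : M, Submodule.span R {g} = ⊤ := by
  obtain ⟨ι, hι⟩ := hY
  have : IsSimpleModule R (R ⧸ maximalIdeal R) :=
    isSimpleModule_iff_quot_maximal.2 ⟨_, maximalIdeal.isMaximal R, ⟨LinearEquiv.refl _ _⟩⟩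
  have hinj : Function.Injective ι := (LinearMap.injective_or_eq_zero ι).resolve_right hι
  obtain ⟨f, hf⟩ := exists_ne_zero_to_residue (R := R) (N := M)
  obtain ⟨g, hg⟩ : ∃ g, f g ≠ 0 := by
    by_contra! h
    exact hf (LinearMap.ext h)
  -- If `g` does not generate `M`, there is a functional `h` with `h g = 0` and `h v ≠ 0`, so that
  -- `(f ∧ h) (g, v) = f g * h v ≠ 0`.
  refine ⟨g, ?_⟩
  by_contra hne
  have : Nontrivial (M ⧸ Submodule.span R {g}) := Submodule.Quotient.nontrivial_iff.2 hne
  obtain ⟨h', hh'⟩ := exists_ne_zero_to_residue (R := R) (N := M ⧸ Submodule.span R {g})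
  let h : M →ₗ[R] (R ⧸ maximalIdeal R) := h' ∘ₗ (Submodule.span R {g}).mkQ
  have hg0 : h g = 0 := by
    have : (Submodule.span R {g}).mkQ g = 0 := by
      simp
    simp only [h, LinearMap.comp_apply, this, map_zero]
  obtain ⟨v, hv⟩ : ∃ v, h v ≠ 0 := by
    by_contra! hz
    refine hh' (LinearMap.ext fun z => ?_)
    obtain ⟨y, rfl⟩ := Submodule.mkQ_surjective _ z
    exact hz y
  let B : M →ₗ[R] M →ₗ[R] (R ⧸ maximalIdeal R) :=
    (LinearMap.mul R (R ⧸ maximalIdeal R)).compl₁₂ f h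
  let b : M →ₗ[R] M →ₗ[R] Y := (B - B.flip).compr₂ ι
  have hb : ∀ u w, b u w = ι (f u * h w - f w * h u) := fun u w => rfl
  have hb0 := halt b fun u => by rw [hb, sub_self, map_zero]
  have h0 : ι (f g * h v - f v * h g) = 0 := by rw [← hb, hb0]; rfl
  rw [hg0, mul_zero, sub_zero] at h0
  have : f g * h v = 0 := hinj (by rw [h0, map_zero])
  have hp : (maximalIdeal R).IsPrime := (maximalIdeal.isMaximal R).isPrime
  rcases mul_eq_zero.1 this with h1 | h1
  · exact hg h1
  · exact hv h1

theorem isUnit_two_of_ringChar (hchar : ringChar (ResidueField R) ≠ 2) : IsUnit (2 : R) := by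
  have h2 : (2 : ResidueField R) ≠ 0 := Ring.two_ne_zero hchar
  rw [← residue_ne_zero_iff_isUnit, map_ofNat]
  exact h2

end

/-! ### The isomorphism with R -/

theorem stmt_16 (R : Type u) [CommRing R] [IsNoetherianRing R] [IsLocalRing R]
    (hchar : ringChar (IsLocalRing.ResidueField R) ≠ 2)
    (d : ℕ) (hd : ringKrullDim R = d)
    (hCM : DepthGE R (IsLocalRing.maximalIdeal R) R d)
    (ω : Type u) [AddCommGroup ω] [Module R ω]
    (hω : IsCanonicalModule R (IsLocalRing.maximalIdeal R) d ω)
    (M : Type u) [AddCommGroup M] [Module R M] [Module.Finite R M]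
    (hMCM : DepthGE R (IsLocalRing.maximalIdeal R) M d)
    (hrank : HasRankOne R M)
    (hext : ∀ i : ℕ, 1 ≤ i → i ≤ d + 1 →
      IsZero (((Ext R (ModuleCat.{u} R) i).obj
        (Opposite.op (ModuleCat.of R M))).obj (ModuleCat.of R (M →ₗ[R] ω)))) :
    Nonempty (M ≃ₗ[R] R) := by
  simp only [isZero_ext_iff] at hext
  replace hCM : ∀ i < d, ExtVanish R (R ⧸ IsLocalRing.maximalIdeal R) R i :=
    fun i hi => (isZero_ext_iff _ _ _).1 (hCM i hi)
  replace hMCM : ∀ i < d, ExtVanish R (R ⧸ IsLocalRing.maximalIdeal R) M i :=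
    fun i hi => (isZero_ext_iff _ _ _).1 (hMCM i hi)
  obtain ⟨hfin, hdep, ⟨n, hn⟩, hsimple⟩ := hω
  replace hdep : ∀ i < d, ExtVanish R (R ⧸ IsLocalRing.maximalIdeal R) ω i :=
    fun i hi => (isZero_ext_iff _ _ _).1 (hdep i hi)
  have htype : ¬ ExtVanish R (R ⧸ IsLocalRing.maximalIdeal R) ω d := fun h =>
    not_subsingleton_iff_nontrivial.2 hsimple.nontrivial
      (ModuleCat.isZero_iff_subsingleton.1 ((isZero_ext_iff _ _ d).2 h))
  have hinj := extVanish_of_finite_injdim hd hCM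
    (ω := ω) ⟨n, fun N _ _ i hi => (isZero_ext_iff _ _ _).1 (hn (ModuleCat.of R N) i hi)⟩
  have hMω := extVanish_of_depth hinj d M hMCM
  -- `Y` is `ω` modulo a maximal `ω`-regular sequence.
  obtain ⟨Y, _, _, π, hπ, hι⟩ := exists_bilinear_lift (M := M) d ω hdep htype
    (fun i hi _ => hMω i (by omega)) (fun i hi hid => hext i hi (by omega))
  have hreg : ∀ t ∈ nonZeroDivisors R, IsSMulRegular ω t := fun t ht =>
    isSMulRegular_of_mem_nonZeroDivisors hd hdep ht
  have halt : ∀ b : M →ₗ[R] M →ₗ[R] Y, (∀ u, b u u = 0) → b = 0 := by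
    intro b hb
    obtain ⟨ψ, hψ⟩ := hπ b
    ext u v
    -- The antisymmetrization of a lift of `b` to `ω` is alternating, hence zero; so `b` is both
    -- symmetric and alternating.
    have h1 : ψ u v - ψ v u = 0 := hrank.alternating_eq_zero hreg (ψ - ψ.flip)
      (fun u => by simp) u v
    have h2 : b u v - b v u = 0 := by rw [← hψ, ← hψ, ← map_sub, h1, map_zero]
    have h3 : b u v + b v u = 0 := by simpa [hb] using hb (u + v)
    have h4 : (2 : R) • b u v = 0 := by
      rw [two_smul]
      calc b u v + b u v = (b u v - b v u) + (b u v + b v u) := by abel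
        _ = 0 := by rw [h2, h3, add_zero]
    exact (isUnit_two_of_ringChar hchar).smul_eq_zero.1 h4
  have := hrank.nontrivial
  obtain ⟨g, hg⟩ := exists_span_eq_top hι halt
  have hbij : Function.Bijective (LinearMap.toSpanSingleton R M g) := by
    constructor
    · rw [← LinearMap.ker_eq_bot, LinearMap.ker_eq_bot']
      intro r hr
      refine hrank.eq_zero_of_annihilates fun u => ?_
      obtain ⟨s, rfl⟩ := Submodule.mem_span_singleton.1 (hg ▸ Submodule.mem_top : u ∈ _)
      rw [smul_comm, show r • g = 0 from hr, smul_zero]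
    · rw [← LinearMap.range_eq_top, LinearMap.range_toSpanSingleton, hg]
  exact ⟨(LinearEquiv.ofBijective _ hbij).symm⟩
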